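/- (Pruning corollary for consecutive Pareto-optimal cores.) Let G_1, …, G_T be a temporal graph on a finite vertex set V. Suppose (l,δ) and (l',δ') are both Pareto-optimal pairs with l < l' and l + 1 ≤ T, and suppose there is no Pareto-optimal pair (l'',δ'') with l < l'' < l'. Then δ' ≥ δ·l/(l+1), and consequently every vertex u of MDC(l',δ') has de-temporal degree within MDC(l',δ') at least δ·l/(l+1); hence MDC(l',δ') is contained in a subgraph of the de-temporal graph in which every vertex has degree at least δ·l/(l+1). -/

import Mathlib

/-!
The pairs `(l, δ)` with `MDC(l, δ) ≠ ∅` form a down-closed region. This region contains the pair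
`(l + 1, δ l / (l + 1))` whenever it contains `(l, δ)` and `l + 1 ≤ T`: a window of length exactly
`l` can be lengthened by one snapshot without losing edges (`HasCore.succ`). Write
`d = δ l / (l + 1)` and suppose `δ' < d`. Let `m` be the largest length with `MDC(m, d) ≠ ∅`, and
`γ` the largest threshold with `MDC(m, γ) ≠ ∅`, which exists because the set of feasible thresholds
is closed and bounded (`HasCore.exists_max`). Then `(m, γ)` is Pareto-optimal and `l < m`.
Since `(l', δ')` is Pareto-optimal with `δ' < d`, also `m < l'`, so `(m, γ)` lies strictly between
two consecutive Pareto-optimal pairs, which is a contradiction.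

The degree bound follows since the average degree of `u` over a window is at most its de-temporal
degree (`denseNode.le_dtDeg`), so `δ'` is at most the de-temporal degree of `u`.
-/

variable {V : Type*}

-- `tdeg G S u t`: the number of vertices `v ∈ S` adjacent to `u` in the
-- snapshot `G t`.
open Classical in
noncomputable def tdeg (G : ℕ → SimpleGraph V) (S : Finset V) (u : V) (t : ℕ) : ℕ :=
  (S.filter fun v => (G t).Adj u v).card

/-- `u` is an `(l,δ)`-dense node in `S`: there is a window `[s,e] ⊆ [1,T]` of
length at least `l` on which the total degree of `u` towards `S` is at least
`δ · (e − s + 1)`. -/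
def denseNode (T : ℕ) (G : ℕ → SimpleGraph V) (l : ℕ) (δ : ℝ)
    (S : Finset V) (u : V) : Prop :=
  ∃ s e : ℕ, 1 ≤ s ∧ s ≤ e ∧ e ≤ T ∧ l ≤ e - s + 1 ∧
    δ * ((e : ℝ) - s + 1) ≤ ∑ t ∈ Finset.Icc s e, (tdeg G S u t : ℝ)

/-- `C` is `(l,δ)`-dense: every vertex of `C` is an `(l,δ)`-dense node in `C`. -/
def denseSet (T : ℕ) (G : ℕ → SimpleGraph V) (l : ℕ) (δ : ℝ) (C : Finset V) : Prop :=
  ∀ u ∈ C, denseNode T G l δ C u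

-- `dtDeg T G C u`: the de-temporal degree of `u` within `C`, i.e. the number
-- of `v ∈ C` adjacent to `u` in some snapshot `G t`, `t ∈ {1,…,T}`.
open Classical in
noncomputable def dtDeg (T : ℕ) (G : ℕ → SimpleGraph V) (C : Finset V) (u : V) : ℕ :=
  (C.filter fun v => ∃ t : ℕ, 1 ≤ t ∧ t ≤ T ∧ (G t).Adj u v).card

/-- `C` is the `(l,δ)`-maximal dense core: it is `(l,δ)`-dense and contains
every `(l,δ)`-dense subset of `V`. -/
def IsMDC (T : ℕ) (G : ℕ → SimpleGraph V) (l : ℕ) (δ : ℝ) (C : Finset V) : Prop :=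
  denseSet T G l δ C ∧ ∀ S : Finset V, denseSet T G l δ S → S ⊆ C

/-- `(l,δ)` is a Pareto-optimal pair: `2 ≤ l ≤ T`, `δ > 0`, the
`(l,δ)`-maximal dense core is nonempty, and no pair `(l',δ')` with nonempty
maximal dense core dominates it. -/
def Pareto (T : ℕ) (G : ℕ → SimpleGraph V) (l : ℕ) (δ : ℝ) : Prop :=
  2 ≤ l ∧ l ≤ T ∧ 0 < δ ∧
  (∃ C : Finset V, IsMDC T G l δ C ∧ C.Nonempty) ∧
  ∀ (l' : ℕ) (δ' : ℝ) (C' : Finset V), 2 ≤ l' → l' ≤ T → 0 < δ' →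
    IsMDC T G l' δ' C' → C'.Nonempty →
    ¬ ((l < l' ∧ δ ≤ δ') ∨ (l ≤ l' ∧ δ < δ'))

/-- The `(l, δ)`-maximal dense core is nonempty, expressed through an arbitrary nonempty dense
set; see `HasCore.exists_isMDC`. -/
def HasCore (T : ℕ) (G : ℕ → SimpleGraph V) (l : ℕ) (δ : ℝ) : Prop :=
  ∃ C : Finset V, C.Nonempty ∧ denseSet T G l δ C

theorem tdeg_mono (G : ℕ → SimpleGraph V) {S S' : Finset V} (h : S ⊆ S') (u : V) (t : ℕ) :
    tdeg G S u t ≤ tdeg G S' u t := by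
  unfold tdeg
  classical exact Finset.card_le_card (Finset.filter_subset_filter _ h)

theorem denseNode.mono {T : ℕ} {G : ℕ → SimpleGraph V} {l l' : ℕ} {δ δ' : ℝ} {S S' : Finset V}
    {u : V} (h : denseNode T G l δ S u) (hl : l' ≤ l) (hδ : δ' ≤ δ) (hS : S ⊆ S') :
    denseNode T G l' δ' S' u := by
  obtain ⟨s, e, hs, hse, he, hle, hsum⟩ := h
  refine ⟨s, e, hs, hse, he, hl.trans hle, ?_⟩
  have hse' : (s : ℝ) ≤ e := by exact_mod_cast hse
  calc δ' * ((e : ℝ) - s + 1) ≤ δ * ((e : ℝ) - s + 1) :=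
        mul_le_mul_of_nonneg_right hδ (by linarith)
    _ ≤ _ := hsum
    _ ≤ _ := Finset.sum_le_sum fun t _ => by exact_mod_cast tdeg_mono G hS u t

theorem HasCore.mono {T : ℕ} {G : ℕ → SimpleGraph V} {l l' : ℕ} {δ δ' : ℝ}
    (h : HasCore T G l δ) (hl : l' ≤ l) (hδ : δ' ≤ δ) : HasCore T G l' δ' := by
  obtain ⟨C, hne, hC⟩ := h
  exact ⟨C, hne, fun u hu => (hC u hu).mono hl hδ subset_rfl⟩

/-- The maximal dense core exists: it is the union of all dense sets. -/
theorem HasCore.exists_isMDC [Fintype V] {T : ℕ} {G : ℕ → SimpleGraph V} {l : ℕ} {δ : ℝ}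
    (h : HasCore T G l δ) : ∃ C : Finset V, IsMDC T G l δ C ∧ C.Nonempty := by
  classical
  obtain ⟨S, ⟨u, hu⟩, hS⟩ := h
  let C : Finset V := Finset.univ.filter fun v => ∃ S, denseSet T G l δ S ∧ v ∈ S
  have hsub : ∀ S, denseSet T G l δ S → S ⊆ C := fun S hS v hv => by
    simpa [C] using ⟨S, hS, hv⟩
  refine ⟨C, ⟨fun v hv => ?_, hsub⟩, u, hsub S hS hu⟩
  obtain ⟨S', hS', hv'⟩ : ∃ S, denseSet T G l δ S ∧ v ∈ S := by simpa [C] using hv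
  exact (hS' v hv').mono le_rfl le_rfl (hsub S' hS')

theorem denseNode.le_dtDeg {T : ℕ} {G : ℕ → SimpleGraph V} {l : ℕ} {δ : ℝ} {S : Finset V}
    {u : V} (h : denseNode T G l δ S u) : δ ≤ dtDeg T G S u := by
  classical
  obtain ⟨s, e, hs, hse, he, -, hsum⟩ := h
  have hse' : (s : ℝ) ≤ e := by exact_mod_cast hse
  have hle : ∑ t ∈ Finset.Icc s e, (tdeg G S u t : ℝ) ≤
      ∑ _t ∈ Finset.Icc s e, (dtDeg T G S u : ℝ) := by
    refine Finset.sum_le_sum fun t ht => ?_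
    rw [Finset.mem_Icc] at ht
    norm_cast
    unfold tdeg dtDeg
    refine Finset.card_le_card fun v hv => ?_
    rw [Finset.mem_filter] at hv ⊢
    exact ⟨hv.1, t, hs.trans ht.1, ht.2.trans he, hv.2⟩
  rw [Finset.sum_const, Nat.card_Icc, nsmul_eq_mul, Nat.cast_sub (by omega)] at hle
  push_cast at hle
  have hpos : 0 < (e : ℝ) - s + 1 := by linarith
  refine le_of_mul_le_mul_right ?_ hpos
  linarith

/-- A window of length `l < T` extends by one snapshot to the left or to the right, so that the
guaranteed average degree drops by a factor of at most `l / (l + 1)`. -/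
theorem denseNode.succ {T : ℕ} {G : ℕ → SimpleGraph V} {l : ℕ} {δ : ℝ} {S : Finset V}
    {u : V} (hδ : 0 < δ) (hlT : l + 1 ≤ T) (h : denseNode T G l δ S u) :
    denseNode T G (l + 1) (δ * l / ((l : ℝ) + 1)) S u := by
  obtain ⟨s, e, hs, hse, he, hle, hsum⟩ := h
  have hl0 : (0 : ℝ) < (l : ℝ) + 1 := by positivity
  rcases Nat.lt_or_ge l (e - s + 1) with hlt | hge
  · have hd : δ * l / ((l : ℝ) + 1) ≤ δ := by
      rw [div_le_iff₀ hl0]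
      nlinarith
    exact denseNode.mono ⟨s, e, hs, hse, he, hlt, hsum⟩ le_rfl hd subset_rfl
  -- The window has length exactly `l`; any window `[s', e'] ⊇ [s, e]` of length `l + 1` will do.
  have hlen : e + 1 = l + s := by omega
  have hlen' : (e : ℝ) + 1 = l + s := by exact_mod_cast hlen
  obtain ⟨s', e', h1, h2, h3, h4, h5⟩ :
      ∃ s' e' : ℕ, 1 ≤ s' ∧ s' ≤ s ∧ e ≤ e' ∧ e' ≤ T ∧ e' = l + s' := by
    rcases Nat.lt_or_ge e T with heT | heT
    · exact ⟨s, e + 1, hs, le_rfl, by omega, heT, by omega⟩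
    · exact ⟨s - 1, e, by omega, by omega, le_rfl, he, by omega⟩
  refine ⟨s', e', h1, by omega, h4, by omega, ?_⟩
  have h5' : (e' : ℝ) = l + s' := by exact_mod_cast h5
  calc δ * l / ((l : ℝ) + 1) * ((e' : ℝ) - s' + 1) = δ * ((e : ℝ) - s + 1) := by
        rw [show (e' : ℝ) - s' + 1 = l + 1 by linarith, div_mul_cancel₀ _ hl0.ne',
          show (e : ℝ) - s + 1 = l by linarith]
    _ ≤ _ := hsum
    _ ≤ _ := Finset.sum_le_sum_of_subset_of_nonneg (Finset.Icc_subset_Icc h2 h3)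
        fun _ _ _ => Nat.cast_nonneg _

theorem HasCore.succ {T : ℕ} {G : ℕ → SimpleGraph V} {l : ℕ} {δ : ℝ} (hδ : 0 < δ)
    (hlT : l + 1 ≤ T) (h : HasCore T G l δ) :
    HasCore T G (l + 1) (δ * l / ((l : ℝ) + 1)) := by
  obtain ⟨C, hne, hC⟩ := h
  exact ⟨C, hne, fun u hu => (hC u hu).succ hδ hlT⟩

theorem HasCore.le_horizon {T : ℕ} {G : ℕ → SimpleGraph V} {l : ℕ} {δ : ℝ}
    (h : HasCore T G l δ) : l ≤ T := by
  obtain ⟨C, ⟨u, hu⟩, hC⟩ := h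
  obtain ⟨s, e, hs, hse, he, hle, -⟩ := hC u hu
  omega

theorem isClosed_setOf_denseNode (T : ℕ) (G : ℕ → SimpleGraph V) (l : ℕ) (S : Finset V) (u : V) :
    IsClosed {δ : ℝ | denseNode T G l δ S u} := by
  -- A finite union, over the windows `[s, e] ⊆ [1, T]`, of closed sets.
  have heq : {δ : ℝ | denseNode T G l δ S u} =
      ⋃ p ∈ (Finset.Icc 1 T ×ˢ Finset.Icc 1 T : Finset (ℕ × ℕ)),
        {δ : ℝ | (p.1 ≤ p.2 ∧ l ≤ p.2 - p.1 + 1) ∧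
          δ * ((p.2 : ℝ) - p.1 + 1) ≤ ∑ t ∈ Finset.Icc p.1 p.2, (tdeg G S u t : ℝ)} := by
    ext δ
    simp only [denseNode, Set.mem_ofPred_eq, Set.mem_iUnion, Finset.mem_product, Finset.mem_Icc,
      exists_prop, Prod.exists]
    constructor
    · rintro ⟨s, e, h1, h2, h3, h4, h5⟩
      exact ⟨s, e, ⟨⟨h1, h2.trans h3⟩, h1.trans h2, h3⟩, ⟨h2, h4⟩, h5⟩
    · rintro ⟨s, e, ⟨⟨h1, -⟩, -, h3⟩, ⟨h2, h4⟩, h5⟩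
      exact ⟨s, e, h1, h2, h3, h4, h5⟩
  rw [heq]
  refine isClosed_biUnion_finset fun p _ => IsClosed.and isClosed_const ?_
  exact isClosed_le (by fun_prop) continuous_const

theorem isClosed_setOf_hasCore [Fintype V] (T : ℕ) (G : ℕ → SimpleGraph V) (l : ℕ) :
    IsClosed {δ : ℝ | HasCore T G l δ} := by
  have heq : {δ : ℝ | HasCore T G l δ} =
      ⋃ C : Finset V, {δ : ℝ | C.Nonempty ∧ ∀ u ∈ C, denseNode T G l δ C u} := by
    ext δ
    simp [HasCore, denseSet]
  rw [heq]
  refine isClosed_iUnion_of_finite fun C => IsClosed.and isClosed_const ?_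
  simp only [Set.ofPred_forall]
  exact isClosed_biInter fun u _ => isClosed_setOf_denseNode T G l C u

theorem HasCore.exists_max [Fintype V] {T : ℕ} {G : ℕ → SimpleGraph V} {l : ℕ} {δ : ℝ}
    (h : HasCore T G l δ) :
    ∃ γ, δ ≤ γ ∧ HasCore T G l γ ∧ ∀ γ', HasCore T G l γ' → γ' ≤ γ := by
  have hbdd : BddAbove {δ : ℝ | HasCore T G l δ} := by
    refine ⟨Fintype.card V, ?_⟩
    rintro γ ⟨C, ⟨u, hu⟩, hC⟩
    refine (hC u hu).le_dtDeg.trans ?_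
    unfold dtDeg
    exact_mod_cast Finset.card_le_univ _
  exact ⟨_, le_csSup hbdd h, (isClosed_setOf_hasCore T G l).csSup_mem ⟨δ, h⟩ hbdd,
    fun γ' h' => le_csSup hbdd h'⟩

/-- pruning corollary for consecutive Pareto-optimal cores: if
`(l,δ)` and `(l',δ')` are Pareto-optimal, `l < l'`, `l + 1 ≤ T`, and no
Pareto-optimal pair lies strictly between `l` and `l'`, then
`δ' ≥ δ·l/(l+1)`, and every vertex of `MDC(l',δ')` has de-temporal degree
within it at least `δ·l/(l+1)`. -/
theorem pareto_pruning_consecutive {V : Type*} [Fintype V] [DecidableEq V]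
    (T : ℕ) (hT : 1 ≤ T) (G : ℕ → SimpleGraph V)
    (l l' : ℕ) (δ δ' : ℝ)
    (hp1 : Pareto T G l δ) (hp2 : Pareto T G l' δ')
    (hll' : l < l') (hl1T : l + 1 ≤ T)
    (hbetween : ∀ (l'' : ℕ) (δ'' : ℝ), Pareto T G l'' δ'' → ¬ (l < l'' ∧ l'' < l'))
    (C' : Finset V) (hC' : IsMDC T G l' δ' C') :
    δ * l / ((l : ℝ) + 1) ≤ δ' ∧
      ∀ u ∈ C', δ * l / ((l : ℝ) + 1) ≤ (dtDeg T G C' u : ℝ) := by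
  obtain ⟨hl2, -, hδ, ⟨C, hC, hCne⟩, -⟩ := hp1
  obtain ⟨hl'2, hl'T, -, -, hopt⟩ := hp2
  have hlpos : (0 : ℝ) < l := by exact_mod_cast (by omega : 0 < l)
  have hd : 0 < δ * l / ((l : ℝ) + 1) := by positivity
  have hcore : HasCore T G (l + 1) (δ * l / ((l : ℝ) + 1)) :=
    HasCore.succ hδ hl1T ⟨C, hCne, hC.1⟩
  generalize δ * l / ((l : ℝ) + 1) = d at hd hcore ⊢
  have key : d ≤ δ' := by
    by_contra! hlt
    classical
    -- `m` is the largest length with a nonempty core at threshold `d`, and `γ` the largest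
    -- threshold with a nonempty core at length `m`.
    obtain ⟨m, hm, hmmax⟩ : ∃ m, HasCore T G m d ∧ ∀ k, HasCore T G k d → k ≤ m :=
      ⟨_, Nat.findGreatest_spec (P := fun k => HasCore T G k d) hl1T hcore,
        fun k hk => Nat.le_findGreatest hk.le_horizon hk⟩
    obtain ⟨γ, hdγ, hγ, hγmax⟩ := hm.exists_max
    have hlm : l < m := hmmax _ hcore
    have hml' : m < l' := by
      by_contra! hge
      obtain ⟨D, hD, hDne⟩ := (hm.mono hge le_rfl).exists_isMDC
      exact hopt l' d D hl'2 hl'T hd hD hDne (Or.inr ⟨le_rfl, hlt⟩)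
    refine hbetween m γ ⟨by omega, hm.le_horizon, hd.trans_le hdγ, hγ.exists_isMDC, ?_⟩
      ⟨hlm, hml'⟩
    rintro k ε D - - - hD hDne (⟨hmk, hγε⟩ | ⟨hmk, hγε⟩)
    · have hk : HasCore T G k ε := ⟨D, hDne, hD.1⟩
      exact absurd (hmmax k (hk.mono le_rfl (hdγ.trans hγε))) (by omega)
    · have hk : HasCore T G k ε := ⟨D, hDne, hD.1⟩
      exact absurd (hγmax ε (hk.mono hmk le_rfl)) (not_le.mpr hγε)
  exact ⟨key, fun u hu => key.trans (hC'.1 u hu).le_dtDeg⟩
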